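/- Uniqueness for large elastic constant: for every c > 0 there exists l*(c) > 0 such that for every l > l*(c) the following holds. If (Q₁₁, Q₁₂, M₁, M₂) and (Q̄₁₁, Q̄₁₂, M̄₁, M̄₂) are two quadruples of functions ℝ → ℝ, each twice continuously differentiable on [−1,1], each satisfying on (−1,1) the system l·Q₁₁'' = 4Q₁₁(Q₁₁²+Q₁₂²−1) − c(M₁²−M₂²), l·Q₁₂'' = 4Q₁₂(Q₁₁²+Q₁₂²−1) − 2cM₁M₂, l·M₁'' = M₁(M₁²+M₂²−1) − 2cQ₁₁M₁ − 2cQ₁₂M₂, l·M₂'' = M₂(M₁²+M₂²−1) + 2cQ₁₁M₂ − 2cQ₁₂M₁, and each satisfying the boundary conditions Q₁₁(−1)=M₁(−1)=1, Q₁₁(1)=M₁(1)=−1, Q₁₂(±1)=M₂(±1)=0, then the two quadruples agree at every point of [−1,1]. -/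

import Mathlib

open Set

/-- A quadruple `(Q11, Q12, M1, M2)` is a classical solution of the ferronematic
Euler–Lagrange system on `[−1,1]` with elastic constant `l`, coupling `c` and
`ξ = 1`, with the given Dirichlet boundary conditions. -/
def FerroSolution (l c : ℝ) (Q11 Q12 M1 M2 : ℝ → ℝ) : Prop :=
  ContDiffOn ℝ 2 Q11 (Icc (-1) 1) ∧ ContDiffOn ℝ 2 Q12 (Icc (-1) 1) ∧
  ContDiffOn ℝ 2 M1 (Icc (-1) 1) ∧ ContDiffOn ℝ 2 M2 (Icc (-1) 1) ∧
  (∀ y ∈ Ioo (-1 : ℝ) 1, l * deriv (deriv Q11) y =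
    4 * Q11 y * ((Q11 y) ^ 2 + (Q12 y) ^ 2 - 1) - c * ((M1 y) ^ 2 - (M2 y) ^ 2)) ∧
  (∀ y ∈ Ioo (-1 : ℝ) 1, l * deriv (deriv Q12) y =
    4 * Q12 y * ((Q11 y) ^ 2 + (Q12 y) ^ 2 - 1) - 2 * c * M1 y * M2 y) ∧
  (∀ y ∈ Ioo (-1 : ℝ) 1, l * deriv (deriv M1) y =
    M1 y * ((M1 y) ^ 2 + (M2 y) ^ 2 - 1) - 2 * c * Q11 y * M1 y - 2 * c * Q12 y * M2 y) ∧
  (∀ y ∈ Ioo (-1 : ℝ) 1, l * deriv (deriv M2) y =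
    M2 y * ((M1 y) ^ 2 + (M2 y) ^ 2 - 1) + 2 * c * Q11 y * M2 y - 2 * c * Q12 y * M1 y) ∧
  Q11 (-1) = 1 ∧ M1 (-1) = 1 ∧ Q11 1 = -1 ∧ M1 1 = -1 ∧
  Q12 (-1) = 0 ∧ Q12 1 = 0 ∧ M2 (-1) = 0 ∧ M2 1 = 0

open Filter Topology

/-- The second derivative is nonpositive at a local maximum. -/
theorem IsLocalMax.deriv_deriv_nonpos {f : ℝ → ℝ} {x : ℝ} (h : IsLocalMax f x)
    (hf : ContinuousAt f x) : deriv (deriv f) x ≤ 0 := by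
  by_contra! hpos
  have hmin : IsLocalMin f x := isLocalMin_of_deriv_deriv_pos hpos h.deriv_eq_zero hf
  have hconst : f =ᶠ[𝓝 x] fun _ => f x := by
    filter_upwards [h, hmin] with z h₁ h₂ using le_antisymm h₁ h₂
  have hzero : deriv (deriv f) x = 0 := by
    rw [hconst.deriv.deriv_eq]
    simp
  exact hpos.ne' hzero

/-- Second-order condition at a local maximum of `∑ uᵢ² - t (2 - y²)`. -/
theorem sum_mul_deriv_deriv_add_le_zero {ι : Type*} [Fintype ι] {u : ι → ℝ → ℝ} {t y : ℝ}
    (hu : ∀ i, ContDiffAt ℝ 2 (u i) y)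
    (hmax : IsLocalMax (fun z => ∑ i, u i z ^ 2 - t * (2 - z ^ 2)) y) :
    ∑ i, u i y * deriv (deriv (u i)) y + t ≤ 0 := by
  have hdiff : ∀ᶠ z in 𝓝 y, ∀ i, DifferentiableAt ℝ (u i) z := by
    refine eventually_all.2 fun i => ?_
    filter_upwards [(hu i).eventually (by simp)] with z hz
    exact hz.differentiableAt (by simp)
  have hfirst : ∀ z, (∀ i, DifferentiableAt ℝ (u i) z) →
      HasDerivAt (fun z => ∑ i, u i z ^ 2 - t * (2 - z ^ 2))
        (∑ i, 2 * (u i z * deriv (u i) z) + 2 * t * z) z := by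
    intro z hz
    have hsum : HasDerivAt (fun z => ∑ i, u i z ^ 2)
        (∑ i, 2 * (u i z * deriv (u i) z)) z := by
      refine HasDerivAt.fun_sum fun i _ => ?_
      refine ((hz i).hasDerivAt.fun_pow 2).congr_deriv ?_
      push_cast
      ring
    refine (hsum.fun_sub
      ((((hasDerivAt_id' z).fun_pow 2).const_sub 2).const_mul t)).congr_deriv ?_
    push_cast
    ring
  have hderiv : deriv (fun z => ∑ i, u i z ^ 2 - t * (2 - z ^ 2)) =ᶠ[𝓝 y]
      fun z => ∑ i, 2 * (u i z * deriv (u i) z) + 2 * t * z := by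
    filter_upwards [hdiff] with z hz using (hfirst z hz).deriv
  have hy := hdiff.self_of_nhds
  have hsecond : HasDerivAt (fun z => ∑ i, 2 * (u i z * deriv (u i) z) + 2 * t * z)
      (∑ i, 2 * (deriv (u i) y * deriv (u i) y + u i y * deriv (deriv (u i)) y) + 2 * t) y := by
    refine HasDerivAt.fun_add (HasDerivAt.fun_sum fun i _ => ?_) ?_
    · have hd : DifferentiableAt ℝ (deriv (u i)) y := by
        have h1 : ContDiffAt ℝ 1 (deriv (u i)) y :=
          ((hu i).fderiv_right (by norm_num)).clm_apply contDiffAt_const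
        exact h1.differentiableAt (by simp)
      exact ((hy i).hasDerivAt.fun_mul hd.hasDerivAt).const_mul 2
    · simpa using (hasDerivAt_id y).const_mul (2 * t)
  have hle := hmax.deriv_deriv_nonpos (hfirst y hy).continuousAt
  rw [hderiv.deriv_eq, hsecond.deriv, ← Finset.mul_sum, Finset.sum_add_distrib] at hle
  have hsq : 0 ≤ ∑ i, deriv (u i) y * deriv (u i) y :=
    Finset.sum_nonneg fun i _ => mul_self_nonneg _
  linarith

/-- A finite family of functions with `l ∑ uᵢ uᵢ'' ≥ -C ∑ uᵢ²`, vanishing at `±1`, vanishes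
when `l > 2 C`. -/
theorem eq_zero_of_neg_mul_sum_sq_le {ι : Type*} [Fintype ι] {u : ι → ℝ → ℝ} {l C : ℝ}
    (hC : 0 ≤ C) (hl : 2 * C < l)
    (hu : ∀ i, ContDiffOn ℝ 2 (u i) (Icc (-1) 1))
    (hleft : ∀ i, u i (-1) = 0) (hright : ∀ i, u i 1 = 0)
    (hode : ∀ y ∈ Ioo (-1 : ℝ) 1,
      -(C * ∑ i, u i y ^ 2) ≤ l * ∑ i, u i y * deriv (deriv (u i)) y) :
    ∀ y ∈ Icc (-1 : ℝ) 1, ∀ i, u i y = 0 := by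
  have hφ : ∀ y ∈ Icc (-1 : ℝ) 1, 0 < 2 - y ^ 2 := fun y hy => by nlinarith [hy.1, hy.2]
  have hcont : ContinuousOn (fun y => (∑ i, u i y ^ 2) / (2 - y ^ 2)) (Icc (-1) 1) := by
    refine ContinuousOn.div (continuousOn_finsetSum _ fun i _ => (hu i).continuousOn.pow 2)
      (by fun_prop) fun y hy => (hφ y hy).ne'
  obtain ⟨y₀, hy₀, hmax⟩ := isCompact_Icc.exists_isMaxOn (nonempty_Icc.2 (by norm_num)) hcont
  set t := (∑ i, u i y₀ ^ 2) / (2 - y₀ ^ 2) with ht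
  have hbound : ∀ y ∈ Icc (-1 : ℝ) 1, ∑ i, u i y ^ 2 ≤ t * (2 - y ^ 2) := fun y hy =>
    (div_le_iff₀ (hφ y hy)).1 (hmax hy)
  have htouch : ∑ i, u i y₀ ^ 2 = t * (2 - y₀ ^ 2) := by
    rw [ht, div_mul_cancel₀ _ (hφ y₀ hy₀).ne']
  have htle : t ≤ 0 := by
    by_contra! htpos
    have hint : y₀ ∈ Ioo (-1 : ℝ) 1 := by
      refine ⟨lt_of_le_of_ne hy₀.1 ?_, lt_of_le_of_ne hy₀.2 ?_⟩
      · rintro rfl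
        simp [hleft] at htouch
        norm_num at htouch
        linarith
      · rintro rfl
        simp [hright] at htouch
        norm_num at htouch
        linarith
    have hnhds : Icc (-1 : ℝ) 1 ∈ 𝓝 y₀ := Icc_mem_nhds hint.1 hint.2
    have hsecond := sum_mul_deriv_deriv_add_le_zero (t := t)
      (fun i => (hu i).contDiffAt hnhds) (by
        filter_upwards [hnhds] with z hz
        linarith [hbound z hz])
    have hle := hode y₀ hint
    rw [htouch] at hle
    have hlt : l * ∑ i, u i y₀ * deriv (deriv (u i)) y₀ ≤ l * -t :=
      mul_le_mul_of_nonneg_left (by linarith) (by linarith)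
    nlinarith [mul_nonneg (mul_nonneg hC htpos.le) (sq_nonneg y₀), mul_lt_mul_of_pos_right hl htpos]
  intro y hy i
  have hsum : ∑ i, u i y ^ 2 ≤ 0 :=
    (hbound y hy).trans (mul_nonpos_of_nonpos_of_nonneg htle (hφ y hy).le)
  have hi : u i y ^ 2 ≤ ∑ i, u i y ^ 2 :=
    Finset.single_le_sum (f := fun i => u i y ^ 2) (fun i _ => sq_nonneg _) (Finset.mem_univ i)
  exact pow_eq_zero_iff (two_ne_zero) |>.1 (le_antisymm (hi.trans hsum) (sq_nonneg _))

/-- Maximum principle: a bound on `∑ uᵢ²` at `±1` propagates to `[-1, 1]` if `∑ uᵢ uᵢ'' > 0`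
wherever the bound fails. -/
theorem sum_sq_le_of_sum_mul_deriv_deriv_pos {ι : Type*} [Fintype ι] {u : ι → ℝ → ℝ} {K : ℝ}
    (hu : ∀ i, ContDiffOn ℝ 2 (u i) (Icc (-1) 1))
    (hleft : ∑ i, u i (-1) ^ 2 ≤ K) (hright : ∑ i, u i 1 ^ 2 ≤ K)
    (hode : ∀ y ∈ Ioo (-1 : ℝ) 1, K < ∑ i, u i y ^ 2 →
      0 < ∑ i, u i y * deriv (deriv (u i)) y) :
    ∀ y ∈ Icc (-1 : ℝ) 1, ∑ i, u i y ^ 2 ≤ K := by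
  have hcont : ContinuousOn (fun y => ∑ i, u i y ^ 2) (Icc (-1) 1) :=
    continuousOn_finsetSum _ fun i _ => (hu i).continuousOn.pow 2
  obtain ⟨y₀, hy₀, hmax⟩ := isCompact_Icc.exists_isMaxOn (nonempty_Icc.2 (by norm_num)) hcont
  suffices h : ∑ i, u i y₀ ^ 2 ≤ K from fun y hy => (hmax hy).trans h
  by_contra! hlt
  have hint : y₀ ∈ Ioo (-1 : ℝ) 1 := by
    refine ⟨lt_of_le_of_ne hy₀.1 ?_, lt_of_le_of_ne hy₀.2 ?_⟩
    · rintro rfl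
      exact hlt.not_ge hleft
    · rintro rfl
      exact hlt.not_ge hright
  have hnhds : Icc (-1 : ℝ) 1 ∈ 𝓝 y₀ := Icc_mem_nhds hint.1 hint.2
  have hsecond := sum_mul_deriv_deriv_add_le_zero (t := 0)
    (fun i => (hu i).contDiffAt hnhds) (by simpa using hmax.isLocalMax hnhds)
  linarith [hode y₀ hint hlt]

/-- Coercivity of the radial component of the ferronematic nonlinearity. -/
theorem ferro_radial_pos {c q r m n : ℝ} (h : 16 + 18 * c ^ 2 < q ^ 2 + r ^ 2 + m ^ 2 + n ^ 2) :
    0 < q * (4 * q * (q ^ 2 + r ^ 2 - 1) - c * (m ^ 2 - n ^ 2))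
      + r * (4 * r * (q ^ 2 + r ^ 2 - 1) - 2 * c * m * n)
      + m * (m * (m ^ 2 + n ^ 2 - 1) - 2 * c * q * m - 2 * c * r * n)
      + n * (n * (m ^ 2 + n ^ 2 - 1) + 2 * c * q * n - 2 * c * r * m) := by
  have hs := mul_pos (sub_pos.2 h) (show 0 < q ^ 2 + r ^ 2 + m ^ 2 + n ^ 2 by
    linarith [sq_nonneg c])
  nlinarith [sq_nonneg (m ^ 2 - n ^ 2 - 3 * c * q), sq_nonneg (2 * m * n - 3 * c * r),
    sq_nonneg (q ^ 2 + r ^ 2 - (m ^ 2 + n ^ 2)), sq_nonneg (q ^ 2 + r ^ 2), sq_nonneg m,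
    sq_nonneg n, mul_nonneg (sq_nonneg c) (sq_nonneg m), mul_nonneg (sq_nonneg c) (sq_nonneg n)]

theorem neg_mul_sq_add_sq_le {B x y z : ℝ} (hz : |z| ≤ 2 * B) :
    -(B * (x ^ 2 + y ^ 2)) ≤ x * y * z := by
  obtain ⟨h₁, h₂⟩ := abs_le.1 hz
  nlinarith [mul_nonneg (sub_nonneg.2 h₂) (sq_nonneg (x - y)),
    mul_nonneg (neg_le_iff_add_nonneg.1 h₁) (sq_nonneg (x + y))]

theorem sub_mul_cubic_ge (a x y x' y' : ℝ) (ha : 0 ≤ a) :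
    -(a * ((x - x') ^ 2 + (y - y') ^ 2)) ≤
      (x - x') * (a * x * (x ^ 2 + y ^ 2 - 1) - a * x' * (x' ^ 2 + y' ^ 2 - 1))
      + (y - y') * (a * y * (x ^ 2 + y ^ 2 - 1) - a * y' * (x' ^ 2 + y' ^ 2 - 1)) := by
  have h : 0 ≤ a * ((x ^ 2 + y ^ 2 + x' ^ 2 + y' ^ 2) * ((x - x') ^ 2 + (y - y') ^ 2)
      + (x ^ 2 + y ^ 2 - (x' ^ 2 + y' ^ 2)) ^ 2) := by positivity
  linarith

/-- One-sided Lipschitz bound for the ferronematic nonlinearity on a bounded set. -/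
theorem ferro_one_sided_lipschitz {c K q r m n q' r' m' n' : ℝ} (hc : 0 < c)
    (hq' : |q'| ≤ K) (hr' : |r'| ≤ K) (hm : |m| ≤ K) (hn : |n| ≤ K)
    (hm' : |m'| ≤ K) (hn' : |n'| ≤ K) :
    -((4 + 12 * (c * K)) * ((q - q') ^ 2 + (r - r') ^ 2 + (m - m') ^ 2 + (n - n') ^ 2)) ≤
      (q - q') * ((4 * q * (q ^ 2 + r ^ 2 - 1) - c * (m ^ 2 - n ^ 2))
        - (4 * q' * (q' ^ 2 + r' ^ 2 - 1) - c * (m' ^ 2 - n' ^ 2)))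
      + (r - r') * ((4 * r * (q ^ 2 + r ^ 2 - 1) - 2 * c * m * n)
        - (4 * r' * (q' ^ 2 + r' ^ 2 - 1) - 2 * c * m' * n'))
      + (m - m') * ((m * (m ^ 2 + n ^ 2 - 1) - 2 * c * q * m - 2 * c * r * n)
        - (m' * (m' ^ 2 + n' ^ 2 - 1) - 2 * c * q' * m' - 2 * c * r' * n'))
      + (n - n') * ((n * (m ^ 2 + n ^ 2 - 1) + 2 * c * q * n - 2 * c * r * m)
        - (n' * (m' ^ 2 + n' ^ 2 - 1) + 2 * c * q' * n' - 2 * c * r' * m')) := by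
  have hpos : ∀ z, |z| ≤ 2 * K → |c * z| ≤ 2 * (c * K) := fun z hz => by
    rw [abs_mul, abs_of_pos hc]
    nlinarith
  have hneg : ∀ z, |z| ≤ 2 * K → |c * -z| ≤ 2 * (c * K) := fun z hz => hpos _ (by rwa [abs_neg])
  have hdouble : ∀ z, |z| ≤ K → |2 * z| ≤ 2 * K := fun z hz => by
    rw [abs_mul, abs_two]
    linarith
  have hadd : ∀ z w, |z| ≤ K → |w| ≤ K → |z + w| ≤ 2 * K := fun z w hz hw =>
    (abs_add_le z w).trans (by linarith)
  have hcK : 0 ≤ c * K := mul_nonneg hc.le ((abs_nonneg _).trans hm)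
  have hQ := sub_mul_cubic_ge 4 q r q' r' (by norm_num)
  have hM := sub_mul_cubic_ge 1 m n m' n' (by norm_num)
  have h₁ := neg_mul_sq_add_sq_le (x := q - q') (y := m - m') (hneg _ (hadd m m' hm hm'))
  have h₂ := neg_mul_sq_add_sq_le (x := q - q') (y := n - n') (hpos _ (hadd n n' hn hn'))
  have h₃ := neg_mul_sq_add_sq_le (x := r - r') (y := m - m') (hneg _ (hdouble n hn))
  have h₄ := neg_mul_sq_add_sq_le (x := r - r') (y := n - n') (hneg _ (hdouble m' hm'))
  have h₅ := neg_mul_sq_add_sq_le (x := q - q') (y := m - m') (hneg _ (hdouble m hm))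
  have h₆ := neg_mul_sq_add_sq_le (x := m - m') (y := m - m') (hneg _ (hdouble q' hq'))
  have h₇ := neg_mul_sq_add_sq_le (x := r - r') (y := m - m') (hneg _ (hdouble n hn))
  have h₈ := neg_mul_sq_add_sq_le (x := n - n') (y := m - m') (hneg _ (hdouble r' hr'))
  have h₉ := neg_mul_sq_add_sq_le (x := q - q') (y := n - n') (hpos _ (hdouble n hn))
  have h₁₀ := neg_mul_sq_add_sq_le (x := n - n') (y := n - n') (hpos _ (hdouble q' hq'))
  have h₁₁ := neg_mul_sq_add_sq_le (x := r - r') (y := n - n') (hneg _ (hdouble m hm))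
  have h₁₂ := neg_mul_sq_add_sq_le (x := m - m') (y := n - n') (hneg _ (hdouble r' hr'))
  have hq := mul_nonneg hcK (sq_nonneg (q - q'))
  have hr := mul_nonneg hcK (sq_nonneg (r - r'))
  have hm₀ := mul_nonneg hcK (sq_nonneg (m - m'))
  have hn₀ := mul_nonneg hcK (sq_nonneg (n - n'))
  have hm₁ := sq_nonneg (m - m')
  have hn₁ := sq_nonneg (n - n')
  linarith

/-- A priori bound for solutions, independent of the elastic constant. -/
theorem FerroSolution.sum_sq_le {l c : ℝ} {Q11 Q12 M1 M2 : ℝ → ℝ} (hl : 0 < l)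
    (h : FerroSolution l c Q11 Q12 M1 M2) : ∀ y ∈ Icc (-1 : ℝ) 1,
      Q11 y ^ 2 + Q12 y ^ 2 + M1 y ^ 2 + M2 y ^ 2 ≤ 16 + 18 * c ^ 2 := by
  obtain ⟨dQ11, dQ12, dM1, dM2, eQ11, eQ12, eM1, eM2, b1, b2, b3, b4, b5, b6, b7, b8⟩ := h
  have key := sum_sq_le_of_sum_mul_deriv_deriv_pos (u := ![Q11, Q12, M1, M2])
    (K := 16 + 18 * c ^ 2) (by simp [Fin.forall_fin_succ, *])
    (by simp [Fin.sum_univ_four, *]; nlinarith [sq_nonneg c])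
    (by simp [Fin.sum_univ_four, *]; nlinarith [sq_nonneg c]) (by
      intro y hy hK
      simp only [Fin.sum_univ_four, Matrix.cons_val] at hK ⊢
      have hpos := ferro_radial_pos hK
      rw [← eQ11 y hy, ← eQ12 y hy, ← eM1 y hy, ← eM2 y hy] at hpos
      refine pos_of_mul_pos_right (a := l) ?_ hl.le
      linarith)
  simpa [Fin.sum_univ_four] using key

theorem FerroSolution.abs_le {l c : ℝ} {Q11 Q12 M1 M2 : ℝ → ℝ} (hl : 0 < l)
    (h : FerroSolution l c Q11 Q12 M1 M2) {y : ℝ} (hy : y ∈ Icc (-1 : ℝ) 1) :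
    |Q11 y| ≤ 16 + 18 * c ^ 2 ∧ |Q12 y| ≤ 16 + 18 * c ^ 2 ∧
      |M1 y| ≤ 16 + 18 * c ^ 2 ∧ |M2 y| ≤ 16 + 18 * c ^ 2 := by
  have hK := h.sum_sq_le hl y hy
  have hsq : ∀ z, z ^ 2 ≤ 16 + 18 * c ^ 2 → |z| ≤ 16 + 18 * c ^ 2 := fun z hz =>
    abs_le_of_sq_le_sq (by nlinarith [sq_nonneg c]) (by positivity)
  refine ⟨hsq _ ?_, hsq _ ?_, hsq _ ?_, hsq _ ?_⟩ <;>
    linarith [sq_nonneg (Q11 y), sq_nonneg (Q12 y), sq_nonneg (M1 y), sq_nonneg (M2 y)]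

theorem deriv_deriv_sub_of_contDiffAt {f g : ℝ → ℝ} {y : ℝ} (hf : ContDiffAt ℝ 2 f y)
    (hg : ContDiffAt ℝ 2 g y) :
    deriv (deriv (f - g)) y = deriv (deriv f) y - deriv (deriv g) y := by
  simpa [iteratedDeriv_succ, iteratedDeriv_zero] using iteratedDeriv_sub hf hg

/-- Uniqueness of the critical point for sufficiently large elastic constant: for
every `c > 0` there exists `l*(c) > 0` such that for all `l > l*(c)` any two
classical solutions of the ferronematic boundary-value problem coincide. -/
theorem ferro_uniqueness_large_l (c : ℝ) (hc : 0 < c) :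
    ∃ lstar : ℝ, 0 < lstar ∧ ∀ l : ℝ, lstar < l →
      ∀ Q11 Q12 M1 M2 Q11' Q12' M1' M2' : ℝ → ℝ,
        FerroSolution l c Q11 Q12 M1 M2 →
        FerroSolution l c Q11' Q12' M1' M2' →
        ∀ y ∈ Icc (-1 : ℝ) 1,
          Q11 y = Q11' y ∧ Q12 y = Q12' y ∧ M1 y = M1' y ∧ M2 y = M2' y := by
  refine ⟨2 * (4 + 12 * (c * (16 + 18 * c ^ 2))), by positivity, ?_⟩
  intro l hl Q11 Q12 M1 M2 Q11' Q12' M1' M2' h h'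
  have hC : 0 ≤ 4 + 12 * (c * (16 + 18 * c ^ 2)) := by positivity
  have hl₀ : 0 < l := by linarith
  have hb := fun y (hy : y ∈ Icc (-1 : ℝ) 1) => h.abs_le hl₀ hy
  have hb' := fun y (hy : y ∈ Icc (-1 : ℝ) 1) => h'.abs_le hl₀ hy
  obtain ⟨dQ11, dQ12, dM1, dM2, eQ11, eQ12, eM1, eM2, b1, b2, b3, b4, b5, b6, b7, b8⟩ := h
  obtain ⟨dQ11', dQ12', dM1', dM2', eQ11', eQ12', eM1', eM2',
    b1', b2', b3', b4', b5', b6', b7', b8'⟩ := h'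
  have key := eq_zero_of_neg_mul_sum_sq_le
    (u := ![Q11 - Q11', Q12 - Q12', M1 - M1', M2 - M2']) hC hl
    (by
      simp only [Fin.forall_fin_succ, Matrix.cons_val]
      exact ⟨dQ11.sub dQ11', dQ12.sub dQ12', dM1.sub dM1', dM2.sub dM2', by simp⟩)
    (by simp [Fin.forall_fin_succ, *]) (by simp [Fin.forall_fin_succ, *]) (by
      intro y hy
      have hnhds : Icc (-1 : ℝ) 1 ∈ 𝓝 y := Icc_mem_nhds hy.1 hy.2
      obtain ⟨-, -, hm, hn⟩ := hb y (Ioo_subset_Icc_self hy)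
      obtain ⟨hq', hr', hm', hn'⟩ := hb' y (Ioo_subset_Icc_self hy)
      have hlip := ferro_one_sided_lipschitz (q := Q11 y) (r := Q12 y) hc hq' hr' hm hn hm' hn'
      rw [← eQ11 y hy, ← eQ12 y hy, ← eM1 y hy, ← eM2 y hy,
        ← eQ11' y hy, ← eQ12' y hy, ← eM1' y hy, ← eM2' y hy] at hlip
      simp only [Fin.sum_univ_four, Matrix.cons_val, Pi.sub_apply,
        deriv_deriv_sub_of_contDiffAt (dQ11.contDiffAt hnhds) (dQ11'.contDiffAt hnhds),
        deriv_deriv_sub_of_contDiffAt (dQ12.contDiffAt hnhds) (dQ12'.contDiffAt hnhds),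
        deriv_deriv_sub_of_contDiffAt (dM1.contDiffAt hnhds) (dM1'.contDiffAt hnhds),
        deriv_deriv_sub_of_contDiffAt (dM2.contDiffAt hnhds) (dM2'.contDiffAt hnhds)]
      refine hlip.trans (le_of_eq ?_)
      ring)
  intro y hy
  simpa [Fin.forall_fin_succ, sub_eq_zero] using key y hy
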